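/- For n = s + r with s ≥ r ≥ 1 and Δ < r, the number of permutations π ∈ S_n with longest increasing subsequence of length 2, longest decreasing subsequence of length s, and exactly C(s,2) + C(r,2) + Δ inversions, equals p_2(Δ) if s = r, and equals 2·p_2(Δ) if s > r. -/

import Mathlib

/-- The number of inversions of a permutation of `Fin n`:
pairs of positions `i < j` with `π i > π j`. -/
def invCount {n : ℕ} (π : Equiv.Perm (Fin n)) : ℕ :=
  (Finset.univ.filter fun p : Fin n × Fin n => p.1 < p.2 ∧ π p.2 < π p.1).card

/-- The length of the longest (strictly) increasing subsequence of `π`. -/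
noncomputable def lisLen {n : ℕ} (π : Equiv.Perm (Fin n)) : ℕ :=
  sSup {k | ∃ t : Finset (Fin n), t.card = k ∧ StrictMonoOn ⇑π ↑t}

/-- The length of the longest (strictly) decreasing subsequence of `π`. -/
noncomputable def ldsLen {n : ℕ} (π : Equiv.Perm (Fin n)) : ℕ :=
  sSup {k | ∃ t : Finset (Fin n), t.card = k ∧ StrictAntiOn ⇑π ↑t}

/-- `p₂(Δ)`: the number of pairs `(μ, ν)` of partitions with `|μ| + |ν| = Δ`. -/
noncomputable def twoColored (Δ : ℕ) : ℕ :=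
  Nat.card {pq : (Σ k : Fin (Δ + 1), Nat.Partition k) ×
      (Σ k : Fin (Δ + 1), Nat.Partition k) // ((pq.1.1 : ℕ) + (pq.2.1 : ℕ) = Δ)}

/-!
Without increasing subsequences of length three, the set `P` of positions where a non-inversion of
`π` starts and its complement both carry decreasing subsequences, and every non-inversion lies in
`P ×ˢ Pᶜ`. Such a `π` is determined by the two sets `P` and `π(P)`. A pair in `P ×ˢ Pᶜ` fails to be
a non-inversion when its positions or its values are in the wrong order, and never both, so
`#P * #Pᶜ` exceeds the number of non-inversions by the number of wrongly ordered pairs for `P` plus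
that for `π(P)`; these two numbers are the sizes of the partitions, fitting in a `#P × #Pᶜ` box,
that the subsets `P` and `π(P)` encode.

With `s * r - Δ` non-inversions, `Δ < r` and a decreasing subsequence of length `s`, necessarily
`#P` is `s` or `r`. Conversely, from any two subsets of that size whose partitions have total size
`Δ`, the permutation mapping the first onto the second, decreasing on it and on its complement, has
the required statistics. Since `Δ < r`, the box imposes no restriction on the two partitions.
-/

open Finset

theorem card_inter_le_one_of_strictMonoOn_of_strictAntiOn {α β : Type*} [LinearOrder α]
    [Preorder β] {f : α → β} {s t : Finset α} (hs : StrictMonoOn f s) (ht : StrictAntiOn f t) :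
    #(s ∩ t) ≤ 1 := by
  refine card_le_one.2 fun i hi j hj => ?_
  rw [mem_inter] at hi hj
  rcases lt_trichotomy i j with hij | rfl | hji
  · exact ((hs hi.1 hj.1 hij).asymm (ht hi.2 hj.2 hij)).elim
  · rfl
  · exact ((hs hj.1 hi.1 hji).asymm (ht hj.2 hi.2 hji)).elim

theorem card_inter_add_card_inter_compl {α : Type*} [DecidableEq α] [Fintype α]
    (s t : Finset α) : #(s ∩ t) + #(s ∩ tᶜ) = #s := by
  rw [← sdiff_eq_inter_compl, card_inter_add_card_sdiff]

section NonInversions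

variable {α : Type*} [LinearOrder α] [Fintype α] {π : Equiv.Perm α} {P t : Finset α}

/-- The non-inversions of `π`, as pairs of positions `i < j` with `π i < π j`. -/
def nonInversions (π : Equiv.Perm α) : Finset (α × α) :=
  {p | p.1 < p.2 ∧ π p.1 < π p.2}

/-- The positions at which some non-inversion of `π` starts. If `π` has no increasing subsequence
of length three, these positions and the remaining ones carry two decreasing subsequences. -/
def nonInversionStarts (π : Equiv.Perm α) : Finset α :=
  (nonInversions π).image Prod.fst

/-- The number of pairs consisting of an element of `P` and a smaller element outside `P`. This is
the size of the partition bounded by the lattice path whose north steps are at the positions in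
`P` and whose east steps are at the other positions. -/
def gapCount (P : Finset α) : ℕ :=
  #{p ∈ P ×ˢ Pᶜ | p.2 < p.1}

theorem mem_nonInversions {p : α × α} :
    p ∈ nonInversions π ↔ p.1 < p.2 ∧ π p.1 < π p.2 := by
  simp [nonInversions]

theorem strictAntiOn_iff_disjoint_nonInversions :
    StrictAntiOn π t ↔ Disjoint (nonInversions π) (t ×ˢ t) := by
  simp only [StrictAntiOn, mem_coe, disjoint_right, Prod.forall, mem_product, mem_nonInversions,
    not_and, not_lt, and_imp]
  refine ⟨fun h i j hi hj hij => (h hi hj hij).le, fun h i hi j hj hij => ?_⟩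
  exact (h i j hi hj hij).lt_of_ne (π.injective.ne hij.ne')

theorem strictAntiOn_of_nonInversions_subset (h : nonInversions π ⊆ P ×ˢ Pᶜ) :
    StrictAntiOn π P ∧ StrictAntiOn π (Pᶜ : Finset α) := by
  simp only [strictAntiOn_iff_disjoint_nonInversions]
  refine ⟨disjoint_of_subset_left h ?_, disjoint_of_subset_left h ?_⟩
  · exact disjoint_product.2 (.inr disjoint_compl_left)
  · exact disjoint_product.2 (.inl disjoint_compl_right)

theorem nonInversions_subset_nonInversionStarts
    (h : ∀ t : Finset α, StrictMonoOn π t → #t ≤ 2) :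
    nonInversions π ⊆ nonInversionStarts π ×ˢ (nonInversionStarts π)ᶜ := by
  rintro ⟨i, j⟩ hij
  refine mem_product.2 ⟨mem_image_of_mem _ hij, mem_compl.2 fun hj => ?_⟩
  obtain ⟨⟨j, k⟩, hjk, rfl⟩ := mem_image.1 hj
  simp only [mem_nonInversions] at hij hjk
  have hmono : StrictMonoOn π ↑({i, j, k} : Finset α) := by
    intro x hx y hy hxy
    grind
  have hcard : #({i, j, k} : Finset α) = 3 :=
    card_eq_three.2 ⟨i, j, k, hij.1.ne, (hij.1.trans hjk.1).ne, hjk.1.ne, rfl⟩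
  have := h _ hmono
  omega

theorem gapCount_map (π : Equiv.Perm α) (P : Finset α) :
    gapCount (P.map π.toEmbedding) = #{p ∈ P ×ˢ Pᶜ | π p.2 < π p.1} := by
  symm
  refine card_equiv (π.prodCongr π) fun p => ?_
  simp

theorem product_compl_sdiff_nonInversions (π : Equiv.Perm α) (P : Finset α) :
    (P ×ˢ Pᶜ) \ nonInversions π =
      {p ∈ P ×ˢ Pᶜ | p.2 < p.1} ∪ {p ∈ P ×ˢ Pᶜ | π p.2 < π p.1} := by
  rw [← filter_or]
  ext ⟨i, j⟩
  simp only [mem_sdiff, mem_filter, mem_nonInversions, mem_product, mem_compl]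
  refine and_congr_right fun ⟨hi, hj⟩ => ?_
  have hne : j ≠ i := fun h => hj (h ▸ hi)
  have hne' : π j ≠ π i := π.injective.ne hne
  rw [not_and_or, not_lt, not_lt, hne.le_iff_lt, hne'.le_iff_lt]

theorem card_product_compl_sdiff_nonInversions_le (π : Equiv.Perm α) (P : Finset α) :
    #((P ×ˢ Pᶜ) \ nonInversions π) ≤ gapCount P + gapCount (P.map π.toEmbedding) := by
  rw [product_compl_sdiff_nonInversions, gapCount_map]
  exact card_union_le _ _

theorem card_nonInversions_add_gapCount (h : nonInversions π ⊆ P ×ˢ Pᶜ) :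
    #(nonInversions π) + (gapCount P + gapCount (P.map π.toEmbedding)) = #P * #Pᶜ := by
  have hdisj : Disjoint {p ∈ P ×ˢ Pᶜ | p.2 < p.1} {p ∈ P ×ˢ Pᶜ | π p.2 < π p.1} := by
    rw [disjoint_filter]
    rintro ⟨i, j⟩ hp hlt hlt'
    have hji := h (mem_nonInversions.2 ⟨hlt, hlt'⟩ : (j, i) ∈ nonInversions π)
    exact mem_compl.1 (mem_product.1 hp).2 (mem_product.1 hji).1
  rw [gapCount_map, gapCount, ← card_union_of_disjoint hdisj, ← product_compl_sdiff_nonInversions,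
    add_comm, card_sdiff_add_card_eq_card h, card_product]

theorem inter_product_inter_compl_subset_sdiff_nonInversions (P : Finset α)
    (ht : StrictAntiOn π t) :
    (t ∩ P) ×ˢ (t ∩ Pᶜ) ⊆ (P ×ˢ Pᶜ) \ nonInversions π := by
  refine subset_sdiff.2 ⟨product_subset_product inter_subset_right inter_subset_right, ?_⟩
  exact disjoint_of_subset_left (product_subset_product inter_subset_left inter_subset_left)
    (strictAntiOn_iff_disjoint_nonInversions.1 ht).symm

/-- The decreasing set `t` forces the pairs in `(t ∩ P) ×ˢ (t ∩ Pᶜ)` to be missing from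
`nonInversions π`, which leaves too few pairs unless `P` or `Pᶜ` is as large as `t`. -/
theorem card_eq_or_card_compl_eq (h : nonInversions π ⊆ P ×ˢ Pᶜ) (ht : StrictAntiOn π t)
    (hP : #P ≤ #t) (hPc : #Pᶜ ≤ #t) (hcard : #t * #tᶜ < #(nonInversions π) + #tᶜ) :
    #P = #t ∨ #Pᶜ = #t := by
  have hle : #(nonInversions π) + #(t ∩ P) * #(t ∩ Pᶜ) ≤ #P * #Pᶜ := by
    rw [← card_product, ← card_product, ← card_sdiff_add_card_eq_card h, add_comm]
    gcongr
    exact inter_product_inter_compl_subset_sdiff_nonInversions P ht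
  have hP' := card_inter_add_card_inter_compl P t
  have hPc' := card_inter_add_card_inter_compl Pᶜ t
  have ht' := card_inter_add_card_inter_compl t P
  have htc' := card_inter_add_card_inter_compl tᶜ P
  simp only [inter_comm P, inter_comm Pᶜ] at hP' hPc'
  by_contra! hne
  obtain ⟨m, hm⟩ : ∃ m, #t = m + 1 := Nat.exists_eq_succ_of_ne_zero (by omega)
  have h₁ : #(tᶜ ∩ P) * #Pᶜ ≤ #(tᶜ ∩ P) * m := Nat.mul_le_mul_left _ (by omega)
  have h₂ : #(t ∩ P) * #(tᶜ ∩ Pᶜ) ≤ m * #(tᶜ ∩ Pᶜ) := Nat.mul_le_mul_right _ (by omega)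
  have : #P * #Pᶜ ≤ #(t ∩ P) * #(t ∩ Pᶜ) + m * #tᶜ := by
    rw [← htc', ← hP', add_mul]
    nth_rw 1 [← hPc']
    linarith
  rw [hm] at hcard
  linarith

theorem card_le_two_of_strictMonoOn (h : nonInversions π ⊆ P ×ˢ Pᶜ) (ht : StrictMonoOn π t) :
    #t ≤ 2 := by
  obtain ⟨hP, hPc⟩ := strictAntiOn_of_nonInversions_subset h
  have h₁ := card_inter_le_one_of_strictMonoOn_of_strictAntiOn ht hP
  have h₂ := card_inter_le_one_of_strictMonoOn_of_strictAntiOn ht hPc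
  have := card_inter_add_card_inter_compl t P
  omega

theorem exists_mem_nonInversions_of_gapCount_lt
    (h : gapCount P + gapCount (P.map π.toEmbedding) < #Pᶜ) {i : α} (hi : i ∈ P) :
    ∃ j ∈ Pᶜ, (i, j) ∈ nonInversions π := by
  by_contra! hrow
  have hsub : {i} ×ˢ Pᶜ ⊆ (P ×ˢ Pᶜ) \ nonInversions π := by
    rintro ⟨i', j⟩ hp
    obtain ⟨hi', hj⟩ := mem_product.1 hp
    obtain rfl := mem_singleton.1 hi'
    exact mem_sdiff.2 ⟨mem_product.2 ⟨hi, hj⟩, hrow j hj⟩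
  have := (card_le_card hsub).trans (card_product_compl_sdiff_nonInversions_le π P)
  rw [card_product, card_singleton, one_mul] at this
  omega

theorem nonInversions_subset_of_gapCount_lt (hP : StrictAntiOn π P)
    (hPc : StrictAntiOn π (Pᶜ : Finset α))
    (h : gapCount P + gapCount (P.map π.toEmbedding) < #Pᶜ) :
    nonInversions π ⊆ P ×ˢ Pᶜ := by
  rw [strictAntiOn_iff_disjoint_nonInversions, disjoint_left] at hP hPc
  rintro ⟨i, j⟩ hij
  have hi : i ∈ P := by
    by_contra hi
    have hj : j ∈ P := by
      by_contra hj
      exact hPc hij (mem_product.2 ⟨mem_compl.2 hi, mem_compl.2 hj⟩)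
    obtain ⟨k, hk, hjk⟩ := exists_mem_nonInversions_of_gapCount_lt h hj
    rw [mem_nonInversions] at hij hjk
    have hik : (i, k) ∈ nonInversions π :=
      mem_nonInversions.2 ⟨hij.1.trans hjk.1, hij.2.trans hjk.2⟩
    exact hPc hik (mem_product.2 ⟨mem_compl.2 hi, hk⟩)
  refine mem_product.2 ⟨hi, mem_compl.2 fun hj => hP hij (mem_product.2 ⟨hi, hj⟩)⟩

theorem nonInversionStarts_eq_of_gapCount_lt (hP : StrictAntiOn π P)
    (hPc : StrictAntiOn π (Pᶜ : Finset α))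
    (h : gapCount P + gapCount (P.map π.toEmbedding) < #Pᶜ) :
    nonInversionStarts π = P := by
  refine Subset.antisymm (image_subset_iff.2 fun p hp => ?_) fun i hi => ?_
  · exact (mem_product.1 (nonInversions_subset_of_gapCount_lt hP hPc h hp)).1
  · obtain ⟨j, -, hij⟩ := exists_mem_nonInversions_of_gapCount_lt h hi
    exact mem_image_of_mem Prod.fst hij

theorem card_le_max_of_strictAntiOn (ht : StrictAntiOn π t)
    (h : gapCount P + gapCount (P.map π.toEmbedding) < min #P #Pᶜ) :
    #t ≤ max #P #Pᶜ := by
  have hle := (card_le_card (inter_product_inter_compl_subset_sdiff_nonInversions P ht)).trans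
    (card_product_compl_sdiff_nonInversions_le π P)
  rw [card_product] at hle
  have hP : #(t ∩ P) ≤ #P := card_le_card inter_subset_right
  have hPc : #(t ∩ Pᶜ) ≤ #Pᶜ := card_le_card inter_subset_right
  rw [← card_inter_add_card_inter_compl t P]
  rcases Nat.eq_zero_or_pos #(t ∩ P) with h₀ | h₀
  · omega
  rcases Nat.eq_zero_or_pos #(t ∩ Pᶜ) with h₁ | h₁
  · omega
  have : #(t ∩ P) + #(t ∩ Pᶜ) ≤ #(t ∩ P) * #(t ∩ Pᶜ) + 1 := by nlinarith
  omega

end NonInversions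

section LongestSubsequences

theorem isGreatest_sSup_card {α : Type*} [Finite α] {p : Finset α → Prop} (h : p ∅) :
    IsGreatest {k | ∃ t, #t = k ∧ p t} (sSup {k | ∃ t, #t = k ∧ p t}) := by
  have hbdd : BddAbove {k | ∃ t, #t = k ∧ p t} := by
    have := Fintype.ofFinite α
    refine ⟨Fintype.card α, ?_⟩
    rintro _ ⟨t, rfl, -⟩
    exact card_le_univ t
  exact ⟨Nat.sSup_mem ⟨0, ∅, card_empty, h⟩ hbdd, fun _ hk => le_csSup hbdd hk⟩

variable {n : ℕ} {π : Equiv.Perm (Fin n)} {P : Finset (Fin n)}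

theorem isGreatest_lisLen (π : Equiv.Perm (Fin n)) :
    IsGreatest {k | ∃ t : Finset (Fin n), #t = k ∧ StrictMonoOn π t} (lisLen π) :=
  isGreatest_sSup_card (by simp [StrictMonoOn])

theorem isGreatest_ldsLen (π : Equiv.Perm (Fin n)) :
    IsGreatest {k | ∃ t : Finset (Fin n), #t = k ∧ StrictAntiOn π t} (ldsLen π) :=
  isGreatest_sSup_card (by simp [StrictAntiOn])

theorem lisLen_eq_two (h : nonInversions π ⊆ P ×ˢ Pᶜ) (hne : (nonInversions π).Nonempty) :
    lisLen π = 2 := by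
  obtain ⟨⟨i, j⟩, hij⟩ := hne
  rw [mem_nonInversions] at hij
  refine (isGreatest_lisLen π).unique ⟨⟨{i, j}, card_pair hij.1.ne, ?_⟩, ?_⟩
  · intro x hx y hy hxy
    grind
  · rintro _ ⟨t, rfl, ht⟩
    exact card_le_two_of_strictMonoOn h ht

theorem ldsLen_eq_max (hP : StrictAntiOn π P) (hPc : StrictAntiOn π (Pᶜ : Finset (Fin n)))
    (h : gapCount P + gapCount (P.map π.toEmbedding) < min #P #Pᶜ) :
    ldsLen π = max #P #Pᶜ := by
  refine (isGreatest_ldsLen π).unique ⟨?_, ?_⟩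
  · rcases max_choice #P #Pᶜ with hmax | hmax
    · exact ⟨P, hmax.symm, hP⟩
    · exact ⟨Pᶜ, hmax.symm, hPc⟩
  · rintro _ ⟨t, rfl, ht⟩
    exact card_le_max_of_strictAntiOn ht h

theorem invCount_add_card_nonInversions (π : Equiv.Perm (Fin n)) :
    invCount π + #(nonInversions π) = n.choose 2 := by
  have hpairs := Fintype.card_product_filter_lt (α := Fin n)
  rw [Fintype.card_fin, ← card_filter_add_card_filter_not (fun p => π p.2 < π p.1),
    filter_filter, filter_filter] at hpairs
  rw [← hpairs, invCount]
  congr 2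
  ext p
  simp only [mem_nonInversions, mem_filter, mem_univ, true_and, not_lt]
  exact and_congr_right fun hp => (π.injective.ne hp.ne).le_iff_lt.symm

theorem add_choose_two (s r : ℕ) :
    (s + r).choose 2 = s.choose 2 + r.choose 2 + s * r := by
  induction r with
  | zero => simp
  | succ r ih =>
    rw [← add_assoc, Nat.choose_succ_succ' (s + r), Nat.choose_succ_succ' r, ih,
      Nat.choose_one_right, Nat.choose_one_right]
    ring

theorem invCount_eq_iff {s r Δ : ℕ} {π : Equiv.Perm (Fin (s + r))} :
    invCount π = s.choose 2 + r.choose 2 + Δ ↔ #(nonInversions π) + Δ = s * r := by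
  have := invCount_add_card_nonInversions π
  have := add_choose_two s r
  omega

end LongestSubsequences

section DecreasingPermutations

theorem strictAntiOn_iff_strictAnti_comp_orderEmbOfFin {α β : Type*} [LinearOrder α] [Preorder β]
    {f : α → β} {s : Finset α} {k : ℕ} (h : #s = k) :
    StrictAntiOn f s ↔ StrictAnti (f ∘ s.orderEmbOfFin h) := by
  refine ⟨fun hf i j hij => hf (s.orderEmbOfFin_mem h i) (s.orderEmbOfFin_mem h j) (by simpa), ?_⟩
  intro hf x hx y hy hxy
  rw [← range_orderEmbOfFin s h] at hx hy
  obtain ⟨⟨i, rfl⟩, ⟨j, rfl⟩⟩ := hx, hy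
  exact hf ((s.orderEmbOfFin h).lt_iff_lt.1 hxy)

theorem eqOn_of_strictAntiOn_of_image_eq {α β : Type*} [LinearOrder α] [PartialOrder β]
    {f g : α → β} {s : Finset α} (hf : StrictAntiOn f s) (hg : StrictAntiOn g s)
    (h : f '' s = g '' s) : Set.EqOn f g s := by
  rw [strictAntiOn_iff_strictAnti_comp_orderEmbOfFin rfl] at hf hg
  rw [← range_orderEmbOfFin s rfl, ← Set.range_comp, ← Set.range_comp, hf.range_inj hg] at h
  rwa [← range_orderEmbOfFin s rfl, Set.eqOn_range]

variable {α : Type*} [LinearOrder α] [Fintype α]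

theorem perm_eq_of_strictAntiOn_of_map_eq {π ρ : Equiv.Perm α} {P : Finset α}
    (hπ : StrictAntiOn π P) (hπc : StrictAntiOn π (Pᶜ : Finset α))
    (hρ : StrictAntiOn ρ P) (hρc : StrictAntiOn ρ (Pᶜ : Finset α))
    (h : P.map π.toEmbedding = P.map ρ.toEmbedding) : π = ρ := by
  have himage : π '' P = ρ '' P := by simpa using congrArg ((↑) : Finset α → Set α) h
  have himage_compl : π '' (Pᶜ : Finset α) = ρ '' (Pᶜ : Finset α) := by
    rw [coe_compl, Set.image_compl_eq π.bijective, Set.image_compl_eq ρ.bijective, himage]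
  ext i
  by_cases hi : i ∈ P
  · exact eqOn_of_strictAntiOn_of_image_eq hπ hρ himage hi
  · exact eqOn_of_strictAntiOn_of_image_eq hπc hρc himage_compl
      (mem_compl.2 hi)

theorem exists_perm_strictAntiOn_of_card_eq {P V : Finset α} (h : #V = #P) :
    ∃ π : Equiv.Perm α, StrictAntiOn π P ∧ StrictAntiOn π (Pᶜ : Finset α) ∧
      P.map π.toEmbedding = V := by
  have hc : #Vᶜ = #Pᶜ := by rw [card_compl, card_compl, h]
  let e := finSumEquivOfFinset (rfl : #P = #P) (rfl : #Pᶜ = #Pᶜ)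
  let e' := (Equiv.sumCongr Fin.revPerm Fin.revPerm).trans (finSumEquivOfFinset h hc)
  let π : Equiv.Perm α := e.symm.trans e'
  have hπ : π ∘ P.orderEmbOfFin rfl = V.orderEmbOfFin h ∘ Fin.rev :=
    funext fun i => congrArg e' (e.symm_apply_apply (.inl i))
  have hπc : π ∘ Pᶜ.orderEmbOfFin rfl = Vᶜ.orderEmbOfFin hc ∘ Fin.rev :=
    funext fun i => congrArg e' (e.symm_apply_apply (.inr i))
  refine ⟨π, ?_, ?_, ?_⟩
  · rw [strictAntiOn_iff_strictAnti_comp_orderEmbOfFin rfl, hπ]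
    exact (OrderEmbedding.strictMono _).comp_strictAnti Fin.rev_strictAnti
  · rw [strictAntiOn_iff_strictAnti_comp_orderEmbOfFin rfl, hπc]
    exact (OrderEmbedding.strictMono _).comp_strictAnti Fin.rev_strictAnti
  · rw [← coe_inj, coe_map, Equiv.coe_toEmbedding, ← range_orderEmbOfFin P rfl,
      ← Set.range_comp, hπ, Fin.rev_surjective.range_comp, range_orderEmbOfFin]

end DecreasingPermutations

section Partitions

theorem eq_of_monotone_of_map_univ_eq {α : Type*} [PartialOrder α] {a : ℕ} {f g : Fin a → α}
    (hf : Monotone f) (hg : Monotone g) (h : univ.val.map f = univ.val.map g) : f = g := by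
  rw [Fin.univ_val_map, Fin.univ_val_map, Multiset.coe_eq_coe] at h
  exact List.ofFn_injective (h.eq_of_sortedLE hf.sortedLE_ofFn hg.sortedLE_ofFn)

theorem exists_monotone_map_univ_eq {α : Type*} [LinearOrder α] {m : Multiset α} {a : ℕ}
    (h : m.card = a) : ∃ f : Fin a → α, Monotone f ∧ univ.val.map f = m := by
  obtain ⟨l, hl, rfl⟩ : ∃ l : List α, l.SortedLE ∧ (l : Multiset α) = m :=
    ⟨m.sort, (m.pairwise_sort _).sortedLE, m.sort_eq _⟩
  obtain rfl : l.length = a := h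
  exact ⟨l.get, hl.monotone_get, by rw [Fin.univ_val_map, List.ofFn_get]⟩

theorem eq_of_partition_ofSums_eq {k : ℕ} {m m' : Multiset ℕ} (hm : m.sum = k) (hm' : m'.sum = k)
    (hcard : m.card = m'.card)
    (h : Nat.Partition.ofSums k m hm = Nat.Partition.ofSums k m' hm') : m = m' := by
  have hparts : m.filter (· ≠ 0) = m'.filter (· ≠ 0) := by simpa using congrArg (·.parts) h
  rw [← Multiset.filter_add_not (· ≠ 0) m, ← Multiset.filter_add_not (· ≠ 0) m', hparts] at hcard ⊢
  simp only [not_not, Multiset.filter_eq', Multiset.card_add, Multiset.card_replicate,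
    Nat.add_left_cancel_iff] at hcard ⊢
  rw [hcard]

theorem card_parts_le {k : ℕ} (p : Nat.Partition k) : p.parts.card ≤ k := by
  calc p.parts.card = p.parts.card • 1 := by simp
    _ ≤ p.parts.sum := Multiset.card_nsmul_le_sum fun _ hx => p.parts_pos hx
    _ = k := p.parts_sum

theorem exists_partition_ofSums_eq {k a : ℕ} (p : Nat.Partition k) (h : k ≤ a) :
    ∃ (m : Multiset ℕ) (hm : m.sum = k), m.card = a ∧ Nat.Partition.ofSums k m hm = p := by
  refine ⟨p.parts + Multiset.replicate (a - p.parts.card) 0, by simp [p.parts_sum], ?_, ?_⟩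
  · simp [(card_parts_le p).trans h]
  · ext1
    have hpos : p.parts.filter (· ≠ 0) = p.parts :=
      Multiset.filter_eq_self.2 fun x hx => (p.parts_pos hx).ne'
    simp [hpos, Multiset.filter_add, Multiset.mem_replicate]

end Partitions

section Gaps

variable {n a : ℕ} {P Q : Finset (Fin n)}

/-- The number of elements outside `P` below the `i`-th smallest element of `P`. These numbers are
the parts, some of them possibly zero, of the partition encoded by `P`. -/
def gaps (h : #P = a) (i : Fin a) : ℕ :=
  #{y ∈ Pᶜ | y < P.orderEmbOfFin h i}

theorem monotone_gaps (h : #P = a) : Monotone (gaps h) := fun _ _ hij =>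
  card_le_card (monotone_filter_right _ fun _ _ hy =>
    hy.trans_le ((P.orderEmbOfFin h).monotone hij))

theorem sum_gaps (h : #P = a) : ∑ i, gaps h i = gapCount P := by
  calc ∑ i, gaps h i = ∑ x ∈ univ.map (P.orderEmbOfFin h).toEmbedding, #{y ∈ Pᶜ | y < x} := by
        rw [sum_map]
        rfl
    _ = gapCount P := by
        rw [map_orderEmbOfFin_univ, gapCount, card_filter, sum_product]
        simp only [card_filter]

theorem card_filter_lt_orderEmbOfFin (h : #P = a) (i : Fin a) :
    #{y ∈ P | y < P.orderEmbOfFin h i} = i := by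
  have hbelow :
      {y ∈ P | y < P.orderEmbOfFin h i} = (Iio i).map (P.orderEmbOfFin h).toEmbedding := by
    ext y
    simp only [mem_filter, mem_map, mem_Iio]
    constructor
    · rintro ⟨hy, hlt⟩
      obtain ⟨j, rfl⟩ : y ∈ Set.range (P.orderEmbOfFin h) := by rwa [range_orderEmbOfFin, mem_coe]
      exact ⟨j, (OrderEmbedding.lt_iff_lt _).1 hlt, rfl⟩
    · rintro ⟨j, hj, rfl⟩
      exact ⟨P.orderEmbOfFin_mem h j, (OrderEmbedding.lt_iff_lt _).2 hj⟩
  rw [hbelow, card_map, Fin.card_Iio]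

theorem gaps_add_val (h : #P = a) (i : Fin a) : gaps h i + i = P.orderEmbOfFin h i := by
  calc gaps h i + i
      = #(Iio (P.orderEmbOfFin h i) ∩ P) + #(Iio (P.orderEmbOfFin h i) ∩ Pᶜ) := by
        rw [← card_filter_lt_orderEmbOfFin h i, gaps, add_comm]
        congr 2 <;> grind
    _ = P.orderEmbOfFin h i := by
        rw [card_inter_add_card_inter_compl, Fin.card_Iio]

theorem eq_of_gaps_eq (hP : #P = a) (hQ : #Q = a) (h : gaps hP = gaps hQ) : P = Q := by
  have : P.orderEmbOfFin hP = Q.orderEmbOfFin hQ := by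
    ext i
    rw [← gaps_add_val, ← gaps_add_val, h]
  rw [← map_orderEmbOfFin_univ P hP, this, map_orderEmbOfFin_univ]

theorem exists_gaps_eq {f : Fin a → ℕ} (hf : Monotone f) (hn : ∀ i, f i + a ≤ n) :
    ∃ (P : Finset (Fin n)) (h : #P = a), gaps h = f := by
  let e : Fin a → Fin n := fun i => ⟨f i + i, by have := hn i; omega⟩
  have he : StrictMono e := fun i j hij => add_lt_add_of_le_of_lt (hf hij.le) hij
  have hcard : #(univ.map ⟨e, he.injective⟩) = a := by simp
  refine ⟨univ.map ⟨e, he.injective⟩, hcard, funext fun i => ?_⟩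
  have hi := gaps_add_val hcard i
  rw [← orderEmbOfFin_unique hcard (by simp) he] at hi
  exact Nat.add_right_cancel hi

theorem card_filter_gapCount_eq {k : ℕ} (ha : k ≤ a) (hn : a + k ≤ n) :
    #{P ∈ powersetCard a (univ : Finset (Fin n)) | gapCount P = k} =
      Fintype.card (Nat.Partition k) := by
  have hcard {P} (hP : P ∈ {P ∈ powersetCard a (univ : Finset (Fin n)) | gapCount P = k}) :
      #P = a := mem_powersetCard_univ.1 (mem_filter.1 hP).1
  have hsum {P} (hP : P ∈ {P ∈ powersetCard a (univ : Finset (Fin n)) | gapCount P = k}) :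
      (univ.val.map (gaps (hcard hP))).sum = k := (sum_gaps _).trans (mem_filter.1 hP).2
  refine card_bij (t := univ) (fun P hP => Nat.Partition.ofSums k _ (hsum hP))
    (fun _ _ => mem_univ _) (fun P hP Q hQ h => ?_) (fun p _ => ?_)
  · have hgaps := eq_of_partition_ofSums_eq (hsum hP) (hsum hQ) (by simp) h
    exact eq_of_gaps_eq _ _ <|
      eq_of_monotone_of_map_univ_eq (monotone_gaps _) (monotone_gaps _) hgaps
  · obtain ⟨m, hm, hma, rfl⟩ := exists_partition_ofSums_eq p ha
    obtain ⟨f, hf, rfl⟩ := exists_monotone_map_univ_eq hma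
    have hfn (i : Fin a) : f i + a ≤ n := by
      have : f i ≤ k := hm ▸ single_le_sum (f := f) (fun _ _ => Nat.zero_le _) (mem_univ i)
      omega
    obtain ⟨P, hP, rfl⟩ := exists_gaps_eq hf hfn
    exact ⟨P, mem_filter.2 ⟨mem_powersetCard_univ.2 hP, (sum_gaps hP).symm.trans hm⟩, rfl⟩

end Gaps

section PairsOfSubsets

theorem card_filter_product_add_eq {α β : Type*} (S : Finset α) (T : Finset β) (f : α → ℕ)
    (g : β → ℕ) (d : ℕ) :
    #{x ∈ S ×ˢ T | f x.1 + g x.2 = d} =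
      ∑ q ∈ HasAntidiagonal.antidiagonal d, #{x ∈ S | f x = q.1} * #{y ∈ T | g y = q.2} := by
  have hmaps : ∀ x ∈ {x ∈ S ×ˢ T | f x.1 + g x.2 = d},
      (f x.1, g x.2) ∈ HasAntidiagonal.antidiagonal d := fun x hx =>
    HasAntidiagonal.mem_antidiagonal.2 (mem_filter.1 hx).2
  rw [card_eq_sum_card_fiberwise hmaps]
  refine sum_congr rfl fun q hq => ?_
  rw [HasAntidiagonal.mem_antidiagonal] at hq
  rw [← card_product, ← filter_product, filter_filter]
  congr 1
  ext x
  grind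

theorem card_sigma_partition_filter_eq {k d : ℕ} (h : k ≤ d) :
    #{x : Σ k : Fin (d + 1), Nat.Partition k | (x.1 : ℕ) = k} = Fintype.card (Nat.Partition k) := by
  let i₀ : Fin (d + 1) := ⟨k, Nat.lt_succ_of_le h⟩
  have hfiber : ({x | (x.1 : ℕ) = k} : Finset (Σ i : Fin (d + 1), Nat.Partition i)) =
      univ.map (Function.Embedding.sigmaMk i₀) := by
    ext ⟨i, p⟩
    simp only [mem_filter, mem_univ, true_and, mem_map, Function.Embedding.sigmaMk_apply]
    constructor
    · intro hi
      obtain rfl : i = i₀ := Fin.ext hi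
      exact ⟨p, rfl⟩
    · rintro ⟨q, hq⟩
      exact (congrArg (fun x => (x.1 : ℕ)) hq).symm
  rw [hfiber, card_map, card_univ]

theorem twoColored_eq_sum (d : ℕ) :
    twoColored d = ∑ q ∈ HasAntidiagonal.antidiagonal d,
      Fintype.card (Nat.Partition q.1) * Fintype.card (Nat.Partition q.2) := by
  let size (x : Σ k : Fin (d + 1), Nat.Partition k) : ℕ := x.1
  rw [twoColored, Nat.card_eq_fintype_card, Fintype.card_subtype, ← univ_product_univ]
  refine (card_filter_product_add_eq univ univ size size d).trans (sum_congr rfl fun q hq => ?_)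
  rw [HasAntidiagonal.mem_antidiagonal] at hq
  rw [card_sigma_partition_filter_eq (by omega), card_sigma_partition_filter_eq (by omega)]

/-- The pairs `(P, Q)` of `a`-element subsets of `Fin n` with `gapCount P + gapCount Q = d`; they
encode pairs of partitions of total size `d`. -/
def gapPairs (n a d : ℕ) : Finset (Finset (Fin n) × Finset (Fin n)) :=
  {x ∈ powersetCard a univ ×ˢ powersetCard a univ | gapCount x.1 + gapCount x.2 = d}

variable {n a d : ℕ}

theorem mem_gapPairs {x : Finset (Fin n) × Finset (Fin n)} :
    x ∈ gapPairs n a d ↔ (#x.1 = a ∧ #x.2 = a) ∧ gapCount x.1 + gapCount x.2 = d := by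
  simp [gapPairs]

theorem card_gapPairs (ha : d ≤ a) (hn : a + d ≤ n) : #(gapPairs n a d) = twoColored d := by
  rw [gapPairs, card_filter_product_add_eq, twoColored_eq_sum]
  refine sum_congr rfl fun q hq => ?_
  rw [HasAntidiagonal.mem_antidiagonal] at hq
  rw [card_filter_gapCount_eq (by omega) (by omega), card_filter_gapCount_eq (by omega) (by omega)]

theorem disjoint_gapPairs {b : ℕ} (h : a ≠ b) : Disjoint (gapPairs n a d) (gapPairs n b d) := by
  simp only [disjoint_left, mem_gapPairs]
  omega

end PairsOfSubsets

section Bijection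

/-- The positions at which non-inversions of `π` start, together with the values taken there. This
pair determines a permutation without increasing subsequences of length three. -/
def startsAndValues {α : Type*} [LinearOrder α] [Fintype α] (π : Equiv.Perm α) :
    Finset α × Finset α :=
  (nonInversionStarts π, (nonInversionStarts π).map π.toEmbedding)

theorem nonInversions_subset_of_lisLen_eq_two {n : ℕ} {π : Equiv.Perm (Fin n)}
    (h : lisLen π = 2) :
    nonInversions π ⊆ nonInversionStarts π ×ˢ (nonInversionStarts π)ᶜ :=
  nonInversions_subset_nonInversionStarts fun t ht => h ▸ (isGreatest_lisLen π).2 ⟨t, rfl, ht⟩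

theorem injOn_startsAndValues {n : ℕ} :
    Set.InjOn startsAndValues {π : Equiv.Perm (Fin n) | lisLen π = 2} := by
  intro π hπ ρ hρ h
  obtain ⟨hstarts, hvalues⟩ := Prod.ext_iff.1 h
  obtain ⟨hπP, hπPc⟩ :=
    strictAntiOn_of_nonInversions_subset (nonInversions_subset_of_lisLen_eq_two hπ)
  obtain ⟨hρP, hρPc⟩ :=
    strictAntiOn_of_nonInversions_subset (nonInversions_subset_of_lisLen_eq_two hρ)
  simp only [startsAndValues] at hstarts hvalues
  rw [← hstarts] at hvalues hρP hρPc
  exact perm_eq_of_strictAntiOn_of_map_eq hπP hπPc hρP hρPc hvalues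

variable {s r d : ℕ}

theorem card_mul_card_compl {P : Finset (Fin (s + r))} (h : #P = s ∨ #P = r) :
    #P * #Pᶜ = s * r := by
  rw [card_compl, Fintype.card_fin]
  rcases h with h | h <;> simp [h, mul_comm]

theorem card_nonInversionStarts_eq_or_eq {π : Equiv.Perm (Fin (s + r))} (hlis : lisLen π = 2)
    (hlds : ldsLen π = s) (hinv : invCount π = s.choose 2 + r.choose 2 + d) (hd : d < r) :
    #(nonInversionStarts π) = s ∨ #(nonInversionStarts π) = r := by
  have hsub := nonInversions_subset_of_lisLen_eq_two hlis
  obtain ⟨hP, hPc⟩ := strictAntiOn_of_nonInversions_subset hsub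
  obtain ⟨⟨t, ht, hanti⟩, hmax⟩ := isGreatest_ldsLen π
  rw [hlds] at ht hmax
  rw [invCount_eq_iff] at hinv
  have htc : #tᶜ = r := by rw [card_compl, ht, Fintype.card_fin, Nat.add_sub_cancel_left]
  have hcompl := card_add_card_compl (nonInversionStarts π)
  rw [Fintype.card_fin] at hcompl
  have := card_eq_or_card_compl_eq hsub hanti ((hmax ⟨_, rfl, hP⟩).trans_eq ht.symm)
    ((hmax ⟨_, rfl, hPc⟩).trans_eq ht.symm) (by rw [ht, htc]; omega)
  omega

theorem startsAndValues_mem_gapPairs {π : Equiv.Perm (Fin (s + r))} (hlis : lisLen π = 2)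
    (hlds : ldsLen π = s) (hinv : invCount π = s.choose 2 + r.choose 2 + d) (hd : d < r) :
    startsAndValues π ∈ gapPairs (s + r) s d ∪ gapPairs (s + r) r d := by
  have hcard := card_nonInversionStarts_eq_or_eq hlis hlds hinv hd
  have hgap := card_nonInversions_add_gapCount (nonInversions_subset_of_lisLen_eq_two hlis)
  rw [card_mul_card_compl hcard, ← invCount_eq_iff.1 hinv, Nat.add_left_cancel_iff] at hgap
  simp only [startsAndValues, mem_union, mem_gapPairs, card_map, hgap, and_self, and_true]
  exact hcard

theorem exists_startsAndValues_eq {x : Finset (Fin (s + r)) × Finset (Fin (s + r))} (hrs : r ≤ s)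
    (hd : d < r) (hx : x ∈ gapPairs (s + r) s d ∪ gapPairs (s + r) r d) :
    ∃ π : Equiv.Perm (Fin (s + r)), (lisLen π = 2 ∧ ldsLen π = s ∧
      invCount π = s.choose 2 + r.choose 2 + d) ∧ startsAndValues π = x := by
  obtain ⟨P, V⟩ := x
  simp only [mem_union, mem_gapPairs] at hx
  obtain ⟨π, hP, hPc, rfl⟩ := exists_perm_strictAntiOn_of_card_eq (P := P) (V := V) (by omega)
  have hcard : #P = s ∨ #P = r := by omega
  have hcompl := card_add_card_compl P
  rw [Fintype.card_fin] at hcompl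
  have hgap : gapCount P + gapCount (P.map π.toEmbedding) < min #P #Pᶜ := by omega
  have hgap' := hgap.trans_le (min_le_right _ _)
  have hsub := nonInversions_subset_of_gapCount_lt hP hPc hgap'
  have hstarts := nonInversionStarts_eq_of_gapCount_lt hP hPc hgap'
  have hne : (nonInversions π).Nonempty := by
    rw [← image_nonempty (f := Prod.fst), ← nonInversionStarts, hstarts, ← card_pos]
    omega
  refine ⟨π, ⟨lisLen_eq_two hsub hne, ?_, ?_⟩, by rw [startsAndValues, hstarts]⟩
  · rw [ldsLen_eq_max hP hPc hgap]
    omega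
  · rw [invCount_eq_iff, ← card_mul_card_compl hcard, ← card_nonInversions_add_gapCount hsub]
    omega

theorem bijOn_startsAndValues (hrs : r ≤ s) (hd : d < r) :
    Set.BijOn startsAndValues
      {π : Equiv.Perm (Fin (s + r)) | lisLen π = 2 ∧ ldsLen π = s ∧
        invCount π = s.choose 2 + r.choose 2 + d}
      ↑(gapPairs (s + r) s d ∪ gapPairs (s + r) r d) :=
  ⟨fun _ h => startsAndValues_mem_gapPairs h.1 h.2.1 h.2.2 hd,
    injOn_startsAndValues.mono fun _ h => h.1, fun _ hx => exists_startsAndValues_eq hrs hd hx⟩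

end Bijection

/-- Theorem 2.2, the main theorem: for `Δ < r`, the number of
permutations of shape `λ' = (s, r)` (i.e. LIS = 2, LDS = s on `s + r` letters)
with exactly `C(s,2) + C(r,2) + Δ` inversions is `p₂(Δ)` if `s = r` and
`2 p₂(Δ)` if `s > r`. -/
theorem stmt_13 (s r Δ : ℕ) (hr : 1 ≤ r) (hrs : r ≤ s) (hΔ : Δ < r) :
    Nat.card {π : Equiv.Perm (Fin (s + r)) //
        lisLen π = 2 ∧ ldsLen π = s ∧
        invCount π = s.choose 2 + r.choose 2 + Δ} =
      (if s = r then 1 else 2) * twoColored Δ := by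
  have hcard : Nat.card {π : Equiv.Perm (Fin (s + r)) // lisLen π = 2 ∧ ldsLen π = s ∧
      invCount π = s.choose 2 + r.choose 2 + Δ} =
        #(gapPairs (s + r) s Δ ∪ gapPairs (s + r) r Δ) :=
    (bijOn_startsAndValues hrs hΔ).ncard_eq.trans (Set.ncard_coe_finset _)
  have hs : #(gapPairs (s + r) s Δ) = twoColored Δ := card_gapPairs (by omega) (by omega)
  have hr' : #(gapPairs (s + r) r Δ) = twoColored Δ := card_gapPairs (by omega) (by omega)
  rw [hcard]
  split_ifs with h
  · subst h
    rw [union_self, hs, one_mul]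
  · rw [card_union_of_disjoint (disjoint_gapPairs h), hs, hr', two_mul]
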